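/- Let (E, λ) be a training set in ℝ^d and T a decision tree for (E, λ). For reals ℓ_i ≤ r_i (i ∈ {1,…,d}) let E[(ℓ_i,r_i)] = {e ∈ E : ℓ_i < e[i] ≤ r_i for all i}. For a node v of T and integer k' ≥ 0, let Q[v,(ℓ_i,r_i),k'] be the minimum number of examples of E[(ℓ_i,r_i)] misclassified by a tree obtained from the subtree T_v by subtree raising operations pruning at least k' inner nodes in total (the minimum over an empty set being +∞). Then: (i) for every leaf v, Q[v,(ℓ_i,r_i),0] equals the number of examples of E[(ℓ_i,r_i)] whose label differs from the label of v, and Q[v,(ℓ_i,r_i),k'] = +∞ for k' ≥ 1; (ii) for every inner node v with left child u and right child w, letting s_u, s_w be the numbers of inner nodes of T_u, T_w, Q[v,(ℓ_i,r_i),k'] = min( Q[u,(ℓ_i,r_i), max(0, k'−s_w−1)], Q[w,(ℓ_i,r_i), max(0, k'−s_u−1)], min over 0 ≤ k'' ≤ k' of Q[u,(ℓ_i,r_i^u),k''] + Q[w,(ℓ_i^w,r_i),k'−k''] ), where r_i^u = r_i and ℓ_i^w = ℓ_i for i ≠ feat(v), r^u_{feat(v)} = min{r_{feat(v)}, thr(v)},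 and ℓ^w_{feat(v)} = max{ℓ_{feat(v)}, thr(v)}. -/

import Mathlib

/-- The two class labels. -/
inductive Label where
  | blue
  | red
deriving DecidableEq

/-- A decision tree over examples `ι → ℝ` with classes `{blue, red}`:
every inner node carries a feature and a threshold, every leaf a class label.
An example goes to the left child if its value in the node's feature is at most
the threshold, and to the right child otherwise. -/
inductive DTree (ι : Type) where
  | leaf (c : Label)
  | node (feat : ι) (thr : ℝ) (left right : DTree ι)

namespace DTree

variable {ι : Type}

/-- The class that a decision tree assigns to an example. -/
noncomputable def classify : DTree ι → (ι → ℝ) → Label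
  | .leaf c, _ => c
  | .node f t l r, e => if e f ≤ t then l.classify e else r.classify e

/-- The routing path of an example (`false` = left child, `true` = right child);
it is the position of the leaf of the example. -/
noncomputable def route : DTree ι → (ι → ℝ) → List Bool
  | .leaf _, _ => []
  | .node f t l r, e => if e f ≤ t then false :: l.route e else true :: r.route e

/-- The subtree rooted at a position (`none` if the position is not a node). -/
def subtreeAt : DTree ι → List Bool → Option (DTree ι)
  | T, [] => some T
  | .leaf _, _ :: _ => none
  | .node _ _ l r, b :: p => (if b then r else l).subtreeAt p

/-- Replace the subtree at a given position by another tree. -/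
def replaceAt : DTree ι → List Bool → DTree ι → DTree ι
  | _, [], T' => T'
  | .leaf c, _ :: _, _ => .leaf c
  | .node f t l r, b :: p, T' =>
      if b then .node f t l (r.replaceAt p T') else .node f t (l.replaceAt p T') r

/-- The number of inner nodes of a decision tree. -/
def innerCount : DTree ι → ℕ
  | .leaf _ => 0
  | .node _ _ l r => 1 + l.innerCount + r.innerCount

/-- The position `p` is an inner node of `T`. -/
def IsInnerPos (T : DTree ι) (p : List Bool) : Prop :=
  ∃ f t l r, T.subtreeAt p = some (.node f t l r)

/-- The position `p` is a node of `T`. -/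
def IsNodePos (T : DTree ι) (p : List Bool) : Prop :=
  (T.subtreeAt p).isSome

/-- The feature and threshold of the inner node at position `p`. -/
def cutAt (T : DTree ι) (p : List Bool) : Option (ι × ℝ) :=
  match T.subtreeAt p with
  | some (.node f t _ _) => some (f, t)
  | _ => none

/-- The subtree raising operation at position `q` keeping the child in direction `b`:
the subtree rooted at `q` is replaced by the subtree rooted at its `b`-child; it prunes
the node at `q` together with all inner nodes of the subtree rooted at the other child. -/
def raiseAt (T : DTree ι) (q : List Bool) (b : Bool) : DTree ι :=
  match T.subtreeAt q with
  | some (.node _ _ l r) => T.replaceAt q (if b then r else l)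
  | _ => T

end DTree

/-- `E[T,p]`: the examples of `E` whose routing through `T` passes the position `p`. -/
noncomputable def reach {ι : Type} (E : Finset (ι → ℝ)) (T : DTree ι) (p : List Bool) :
    Finset (ι → ℝ) :=
  E.filter fun e => p <+: T.route e

/-- The number of errors of `T` on the training set `(E, lab)`. -/
noncomputable def errCount {ι : Type} (T : DTree ι) (E : Finset (ι → ℝ))
    (lab : (ι → ℝ) → Label) : ℕ :=
  (E.filter fun e => T.classify e ≠ lab e).card

/-- A most frequent label of the labeled set `(E, lab)` (blue in case of a tie). -/
def majorityLabel {ι : Type} (E : Finset (ι → ℝ)) (lab : (ι → ℝ) → Label) : Label :=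
  if (E.filter fun e => lab e = Label.red).card ≤ (E.filter fun e => lab e = Label.blue).card
  then Label.blue else Label.red

/-- One subtree replacement operation: some inner node of `T` is replaced by a leaf
labeled with a most frequent label of the examples reaching it. -/
def ReplStep {ι : Type} (E : Finset (ι → ℝ)) (lab : (ι → ℝ) → Label)
    (T T' : DTree ι) : Prop :=
  ∃ p, T.IsInnerPos p ∧
    T' = T.replaceAt p (.leaf (majorityLabel (reach E T p) lab))

/-- `T` is a reasonable decision tree for `(E, lab)`: every node is reached by some
example and every leaf carries a most frequent label of the examples reaching it. -/
def Reasonable {ι : Type} (E : Finset (ι → ℝ)) (lab : (ι → ℝ) → Label)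
    (T : DTree ι) : Prop :=
  (∀ p, T.IsNodePos p → (reach E T p).Nonempty) ∧
  (∀ p c, T.subtreeAt p = some (.leaf c) → ∀ c' : Label,
    ((reach E T p).filter fun e => lab e = c').card ≤
      ((reach E T p).filter fun e => lab e = c).card)

/-- Apply a sequence of raising operations (given by positions and kept directions). -/
def applySeq {ι : Type} : DTree ι → List (List Bool × Bool) → DTree ι
  | T, [] => T
  | T, (q, b) :: rest => applySeq (T.raiseAt q b) rest

/-- Each raising operation of the sequence is applied at an inner node. -/
def ValidSeq {ι : Type} : DTree ι → List (List Bool × Bool) → Prop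
  | _, [] => True
  | T, (q, b) :: rest => T.IsInnerPos q ∧ ValidSeq (T.raiseAt q b) rest

/-- The total number of inner nodes pruned by a sequence of raising operations. -/
def seqPruned {ι : Type} : DTree ι → List (List Bool × Bool) → ℕ
  | _, [] => 0
  | T, (q, b) :: rest =>
      (match T.subtreeAt q with
        | some (.node _ _ l r) => 1 + DTree.innerCount (if b then l else r)
        | _ => 0) + seqPruned (T.raiseAt q b) rest

/-- `T'` is obtained from `T` by a (possibly empty) sequence of subtree raising
operations. -/
def RaisedFrom {ι : Type} (T T' : DTree ι) : Prop :=
  ∃ steps, ValidSeq T steps ∧ applySeq T steps = T'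

/-- `T'` is obtained from `T` by a sequence of subtree raising operations pruning
exactly `m` inner nodes in total. -/
def RaisedFromPruning {ι : Type} (T : DTree ι) (m : ℕ) (T' : DTree ι) : Prop :=
  ∃ steps, ValidSeq T steps ∧ seqPruned T steps = m ∧ applySeq T steps = T'

/-- Tracking the position of a node through one raising operation: nodes strictly
below the raised node on the discarded side, and the raised node itself, are pruned
(`none`); all other nodes survive at a possibly shifted position. -/
def stepMap (q : List Bool) (b : Bool) (p : List Bool) : Option (List Bool) :=
  if q <+: p then
    if q ++ [b] <+: p then some (q ++ p.drop (q.length + 1)) else none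
  else some p

/-- Tracking the position of a node through a sequence of raising operations. -/
def seqMap : List (List Bool × Bool) → List Bool → Option (List Bool)
  | [], p => some p
  | (q, b) :: rest, p => (stepMap q b p).bind (seqMap rest)

/-- The number of errors of `T` on a multiset of labeled examples. -/
noncomputable def errCountM {ι : Type} (T : DTree ι) (E : Multiset ((ι → ℝ) × Label)) : ℕ :=
  (E.filter fun q => T.classify q.1 ≠ q.2).card

/-- `Qval E lab T lo hi k`: the minimum (in `ℕ∞`, so `⊤` if no tree qualifies)
number of misclassified examples among the examples of `E` in the box
`{e | ∀ i, lo i < e i ≤ hi i}`, over all trees obtained from `T` by subtree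
raising operations pruning at least `k` inner nodes in total. -/
noncomputable def Qval {d : ℕ} (E : Finset (Fin d → ℝ)) (lab : (Fin d → ℝ) → Label)
    (T : DTree (Fin d)) (lo hi : Fin d → ℝ) (k : ℕ) : ℕ∞ :=
  sInf {x : ℕ∞ | ∃ T' m, k ≤ m ∧ RaisedFromPruning T m T' ∧
    x = (errCount T' (E.filter fun e => ∀ i, lo i < e i ∧ e i ≤ hi i) lab : ℕ∞)}

namespace DTree

variable {ι : Type}

/-- The number of inner nodes pruned by the raising operation at `q` keeping the child in
direction `b`. -/
def stepPruned (T : DTree ι) (q : List Bool) (b : Bool) : ℕ :=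
  match T.subtreeAt q with
  | some (.node _ _ l r) => 1 + innerCount (if b then l else r)
  | _ => 0

theorem raiseAt_node_cons (f : ι) (t : ℝ) (u w : DTree ι) (c : Bool) (q : List Bool) (b : Bool) :
    (node f t u w).raiseAt (c :: q) b =
      if c then node f t u (w.raiseAt q b) else node f t (u.raiseAt q b) w := by
  cases c
  · simp only [raiseAt, subtreeAt, replaceAt, Bool.false_eq_true, if_false]
    split <;> rfl
  · simp only [raiseAt, subtreeAt, replaceAt, if_true]
    split <;> rfl

theorem innerCount_raiseAt (T : DTree ι) (q : List Bool) (b : Bool) :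
    (T.raiseAt q b).innerCount + T.stepPruned q b = T.innerCount := by
  induction q generalizing T with
  | nil => cases T <;> cases b <;>
      simp [raiseAt, stepPruned, subtreeAt, replaceAt, innerCount] <;> omega
  | cons c q ih =>
    cases T with
    | leaf c' => rfl
    | node f t u w =>
      rw [raiseAt_node_cons]
      cases c
      · have h := ih u
        change (node f t (u.raiseAt q b) w).innerCount + u.stepPruned q b = _
        simp only [innerCount]
        omega
      · have h := ih w
        change (node f t u (w.raiseAt q b)).innerCount + w.stepPruned q b = _
        simp only [innerCount]
        omega

end DTree

namespace RaisedFromPruning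

variable {ι : Type}

theorem refl (T : DTree ι) : RaisedFromPruning T 0 T :=
  ⟨[], trivial, rfl, rfl⟩

theorem head {T T' : DTree ι} {q : List Bool} {m : ℕ} (b : Bool) (hq : T.IsInnerPos q)
    (h : RaisedFromPruning (T.raiseAt q b) m T') :
    RaisedFromPruning T (T.stepPruned q b + m) T' := by
  obtain ⟨steps, hv, rfl, rfl⟩ := h
  exact ⟨(q, b) :: steps, ⟨hq, hv⟩, rfl, rfl⟩

/-- Induction on a sequence of raising operations, from its first operation. -/
theorem head_induction {T' : DTree ι} {P : DTree ι → ℕ → Prop} (nil : P T' 0)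
    (cons : ∀ (T : DTree ι) (q : List Bool) (b : Bool) (m : ℕ), T.IsInnerPos q →
      P (T.raiseAt q b) m → P T (T.stepPruned q b + m))
    {T : DTree ι} {m : ℕ} (h : RaisedFromPruning T m T') : P T m := by
  obtain ⟨steps, hv, rfl, hT⟩ := h
  induction steps generalizing T with
  | nil => cases hT; exact nil
  | cons s rest ih => exact cons T s.1 s.2 _ hv.1 (ih hv.2 hT)

theorem trans {T T' T'' : DTree ι} {m n : ℕ} (h : RaisedFromPruning T m T')
    (h' : RaisedFromPruning T' n T'') : RaisedFromPruning T (m + n) T'' := by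
  refine head_induction (P := fun T m => RaisedFromPruning T (m + n) T'') ?_ ?_ h
  · simpa using h'
  · intro T q b m hq ih
    rw [add_assoc]
    exact head b hq ih

theorem node_left {u u' : DTree ι} {m : ℕ} (f : ι) (t : ℝ) (w : DTree ι)
    (h : RaisedFromPruning u m u') :
    RaisedFromPruning (.node f t u w) m (.node f t u' w) := by
  refine head_induction
    (P := fun u m => RaisedFromPruning (.node f t u w) m (.node f t u' w)) (refl _) ?_ h
  intro u q b m hq ih
  refine head (q := false :: q) b hq ?_
  rw [DTree.raiseAt_node_cons]
  exact ih

theorem node_right {w w' : DTree ι} {m : ℕ} (f : ι) (t : ℝ) (u : DTree ι)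
    (h : RaisedFromPruning w m w') :
    RaisedFromPruning (.node f t u w) m (.node f t u w') := by
  refine head_induction
    (P := fun w m => RaisedFromPruning (.node f t u w) m (.node f t u w')) (refl _) ?_ h
  intro w q b m hq ih
  refine head (q := true :: q) b hq ?_
  rw [DTree.raiseAt_node_cons]
  exact ih

theorem leaf_iff {c : Label} {m : ℕ} {T' : DTree ι} :
    RaisedFromPruning (.leaf c) m T' ↔ m = 0 ∧ T' = .leaf c := by
  constructor
  · rintro ⟨_ | ⟨⟨_ | ⟨_, _⟩, b⟩, rest⟩, hv, rfl, rfl⟩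
    · exact ⟨rfl, rfl⟩
    · obtain ⟨⟨f, t, l, r, h⟩, -⟩ := hv
      simp [DTree.subtreeAt] at h
    · obtain ⟨⟨f, t, l, r, h⟩, -⟩ := hv
      simp [DTree.subtreeAt] at h
  · rintro ⟨rfl, rfl⟩
    exact refl _

/-- A tree raised from an inner node is raised from one of its two children, or keeps the
node and raises both children independently. -/
theorem node_iff {f : ι} {t : ℝ} {u w : DTree ι} {m : ℕ} {T' : DTree ι} :
    RaisedFromPruning (.node f t u w) m T' ↔
      (∃ n, m = n + (w.innerCount + 1) ∧ RaisedFromPruning u n T') ∨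
      (∃ n, m = n + (u.innerCount + 1) ∧ RaisedFromPruning w n T') ∨
      ∃ n₁ n₂ u' w', m = n₁ + n₂ ∧ RaisedFromPruning u n₁ u' ∧ RaisedFromPruning w n₂ w' ∧
        T' = .node f t u' w' := by
  constructor
  · rintro ⟨steps, hv, rfl, hT⟩
    induction steps generalizing u w with
    | nil => exact .inr (.inr ⟨0, 0, u, w, rfl, refl u, refl w, hT.symm⟩)
    | cons s rest ih =>
      obtain ⟨q, b⟩ := s
      obtain ⟨hq, hv⟩ := hv
      rcases q with _ | ⟨_ | _, q⟩
      · cases b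
        · refine .inl ⟨_, ?_, rest, hv, rfl, hT⟩
          change 1 + w.innerCount + seqPruned u rest = seqPruned u rest + _
          omega
        · refine .inr (.inl ⟨_, ?_, rest, hv, rfl, hT⟩)
          change 1 + u.innerCount + seqPruned w rest = seqPruned w rest + _
          omega
      · have hr : DTree.raiseAt (.node f t u w) (false :: q) b = .node f t (u.raiseAt q b) w :=
          DTree.raiseAt_node_cons ..
        have hm : seqPruned (.node f t u w) ((false :: q, b) :: rest) =
            u.stepPruned q b + seqPruned (.node f t (u.raiseAt q b) w) rest := by
          rw [← hr]; rfl
        have hc := u.innerCount_raiseAt q b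
        have hu : u.IsInnerPos q := hq
        rw [hr] at hv
        rw [applySeq, hr] at hT
        rw [hm]
        obtain ⟨n, hn, h⟩ | ⟨n, hn, h⟩ | ⟨n₁, n₂, u', w', hn, h₁, h₂, rfl⟩ := ih hv hT
        · exact .inl ⟨_, by rw [hn, add_assoc], head b hu h⟩
        · exact .inr (.inl ⟨n, by omega, h⟩)
        · exact .inr (.inr ⟨_, n₂, u', w', by rw [hn, add_assoc], head b hu h₁, h₂, rfl⟩)
      · have hr : DTree.raiseAt (.node f t u w) (true :: q) b = .node f t u (w.raiseAt q b) :=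
          DTree.raiseAt_node_cons ..
        have hm : seqPruned (.node f t u w) ((true :: q, b) :: rest) =
            w.stepPruned q b + seqPruned (.node f t u (w.raiseAt q b)) rest := by
          rw [← hr]; rfl
        have hc := w.innerCount_raiseAt q b
        have hw : w.IsInnerPos q := hq
        rw [hr] at hv
        rw [applySeq, hr] at hT
        rw [hm]
        obtain ⟨n, hn, h⟩ | ⟨n, hn, h⟩ | ⟨n₁, n₂, u', w', hn, h₁, h₂, rfl⟩ := ih hv hT
        · exact .inl ⟨n, by omega, h⟩
        · exact .inr (.inl ⟨_, by rw [hn, add_assoc], head b hw h⟩)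
        · exact .inr (.inr ⟨n₁, _, u', w', by omega, h₁, head b hw h₂, rfl⟩)
  · rintro (⟨n, rfl, h⟩ | ⟨n, rfl, h⟩ | ⟨n₁, n₂, u', w', rfl, hu, hw, rfl⟩)
    · convert head (T := .node f t u w) (q := []) false ⟨f, t, u, w, rfl⟩ h using 1
      change _ = 1 + w.innerCount + n
      omega
    · convert head (T := .node f t u w) (q := []) true ⟨f, t, u, w, rfl⟩ h using 1
      change _ = 1 + u.innerCount + n
      omega
    · exact (node_left f t w hu).trans (node_right f t u' hw)

end RaisedFromPruning

section Qval

variable {d : ℕ} {E : Finset (Fin d → ℝ)} {lab : (Fin d → ℝ) → Label} {T : DTree (Fin d)}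
  {lo hi : Fin d → ℝ} {k : ℕ}

theorem Qval_le {T' : DTree (Fin d)} {m : ℕ} (hk : k ≤ m) (h : RaisedFromPruning T m T') :
    Qval E lab T lo hi k ≤
      (errCount T' (E.filter fun e => ∀ i, lo i < e i ∧ e i ≤ hi i) lab : ℕ∞) :=
  sInf_le ⟨T', m, hk, h, rfl⟩

theorem le_Qval {a : ℕ∞} (h : ∀ T' m, k ≤ m → RaisedFromPruning T m T' →
      a ≤ (errCount T' (E.filter fun e => ∀ i, lo i < e i ∧ e i ≤ hi i) lab : ℕ∞)) :
    a ≤ Qval E lab T lo hi k := by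
  apply le_sInf
  rintro _ ⟨T', m, hk, hT, rfl⟩
  exact h T' m hk hT

/-- A finite value of `Qval` is attained. -/
theorem exists_Qval_eq (h : Qval E lab T lo hi k ≠ ⊤) :
    ∃ T' m, k ≤ m ∧ RaisedFromPruning T m T' ∧ Qval E lab T lo hi k =
      (errCount T' (E.filter fun e => ∀ i, lo i < e i ∧ e i ≤ hi i) lab : ℕ∞) := by
  apply csInf_mem (s := {x : ℕ∞ | ∃ T' m, k ≤ m ∧ RaisedFromPruning T m T' ∧
    x = (errCount T' (E.filter fun e => ∀ i, lo i < e i ∧ e i ≤ hi i) lab : ℕ∞)})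
  rw [Set.nonempty_iff_ne_empty]
  intro hs
  exact h (by rw [Qval, hs, sInf_empty])

/-- The errors of an inner node on a box split into the errors of its children on the two
parts of the box. -/
theorem errCount_node (E : Finset (Fin d → ℝ)) (lab : (Fin d → ℝ) → Label) (f : Fin d) (t : ℝ)
    (u w : DTree (Fin d)) (lo hi : Fin d → ℝ) :
    errCount (.node f t u w) (E.filter fun e => ∀ i, lo i < e i ∧ e i ≤ hi i) lab =
      errCount u (E.filter fun e => ∀ i,
        lo i < e i ∧ e i ≤ Function.update hi f (min (hi f) t) i) lab +
      errCount w (E.filter fun e => ∀ i,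
        Function.update lo f (max (lo f) t) i < e i ∧ e i ≤ hi i) lab := by
  have hu (e : Fin d → ℝ) : (∀ i, lo i < e i ∧ e i ≤ Function.update hi f (min (hi f) t) i) ↔
      (∀ i, lo i < e i ∧ e i ≤ hi i) ∧ e f ≤ t := by
    constructor
    · intro h
      have hf := (h f).2
      rw [Function.update_self, le_min_iff] at hf
      refine ⟨fun i => ⟨(h i).1, ?_⟩, hf.2⟩
      obtain rfl | hi := eq_or_ne i f
      · exact hf.1
      · simpa [hi] using (h i).2
    · rintro ⟨h, hf⟩ i
      refine ⟨(h i).1, ?_⟩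
      obtain rfl | hi := eq_or_ne i f
      · rw [Function.update_self]
        exact le_min (h i).2 hf
      · simpa [hi] using (h i).2
  have hw (e : Fin d → ℝ) : (∀ i, Function.update lo f (max (lo f) t) i < e i ∧ e i ≤ hi i) ↔
      (∀ i, lo i < e i ∧ e i ≤ hi i) ∧ ¬ e f ≤ t := by
    rw [not_le]
    constructor
    · intro h
      have hf := (h f).1
      rw [Function.update_self, max_lt_iff] at hf
      refine ⟨fun i => ⟨?_, (h i).2⟩, hf.2⟩
      obtain rfl | hi := eq_or_ne i f
      · exact hf.1
      · simpa [hi] using (h i).1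
    · rintro ⟨h, hf⟩ i
      refine ⟨?_, (h i).2⟩
      obtain rfl | hi := eq_or_ne i f
      · rw [Function.update_self]
        exact max_lt (h i).1 hf
      · simpa [hi] using (h i).1
  simp only [errCount, hu, hw]
  rw [← Finset.card_filter_add_card_filter_not (fun e : Fin d → ℝ => e f ≤ t)]
  simp only [Finset.filter_filter]
  congr 2 <;> refine Finset.filter_congr fun e _ => ?_
  · by_cases h : e f ≤ t <;> simp [DTree.classify, h]
  · by_cases h : e f ≤ t <;> simp [DTree.classify, h]

theorem Qval_leaf_zero (E : Finset (Fin d → ℝ)) (lab : (Fin d → ℝ) → Label) (c : Label)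
    (lo hi : Fin d → ℝ) : Qval E lab (.leaf c) lo hi 0 =
      ((E.filter fun e => (∀ i, lo i < e i ∧ e i ≤ hi i) ∧ lab e ≠ c).card : ℕ∞) := by
  have he : errCount (.leaf c) (E.filter fun e => ∀ i, lo i < e i ∧ e i ≤ hi i) lab =
      (E.filter fun e => (∀ i, lo i < e i ∧ e i ≤ hi i) ∧ lab e ≠ c).card := by
    rw [errCount, Finset.filter_filter]
    congr 1
    ext e
    rw [Finset.mem_filter, Finset.mem_filter, ne_comm, DTree.classify]
  rw [← he]
  refine le_antisymm (Qval_le le_rfl (.refl _)) (le_Qval fun T' m _ h => ?_)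
  rw [(RaisedFromPruning.leaf_iff.1 h).2]

theorem Qval_leaf_of_pos (E : Finset (Fin d → ℝ)) (lab : (Fin d → ℝ) → Label) (c : Label)
    (lo hi : Fin d → ℝ) (hk : 1 ≤ k) : Qval E lab (.leaf c) lo hi k = ⊤ := by
  refine top_le_iff.1 (le_Qval fun T' m hm h => ?_)
  have := (RaisedFromPruning.leaf_iff.1 h).1
  omega

theorem Qval_node (E : Finset (Fin d → ℝ)) (lab : (Fin d → ℝ) → Label) (f : Fin d) (t : ℝ)
    (u w : DTree (Fin d)) (lo hi : Fin d → ℝ) (k : ℕ) :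
    Qval E lab (.node f t u w) lo hi k
      = min (Qval E lab u lo hi (k - (w.innerCount + 1)))
          (min (Qval E lab w lo hi (k - (u.innerCount + 1)))
            ((Finset.range (k + 1)).inf fun j =>
              Qval E lab u lo (Function.update hi f (min (hi f) t)) j
              + Qval E lab w (Function.update lo f (max (lo f) t)) hi (k - j))) := by
  apply le_antisymm
  · refine le_min (le_Qval fun T' m hm h => ?_) (le_min (le_Qval fun T' m hm h => ?_)
      (Finset.le_inf fun j hj => ?_))
    · exact Qval_le (by omega) (RaisedFromPruning.node_iff.2 (.inl ⟨m, rfl, h⟩))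
    · exact Qval_le (by omega) (RaisedFromPruning.node_iff.2 (.inr (.inl ⟨m, rfl, h⟩)))
    · by_cases hu : Qval E lab u lo (Function.update hi f (min (hi f) t)) j = ⊤
      · simp [hu]
      by_cases hw : Qval E lab w (Function.update lo f (max (lo f) t)) hi (k - j) = ⊤
      · simp [hw]
      obtain ⟨u', m₁, hm₁, hu', hQu⟩ := exists_Qval_eq hu
      obtain ⟨w', m₂, hm₂, hw', hQw⟩ := exists_Qval_eq hw
      rw [hQu, hQw, ← Nat.cast_add, ← errCount_node]
      exact Qval_le (by omega)
        (RaisedFromPruning.node_iff.2 (.inr (.inr ⟨m₁, m₂, u', w', rfl, hu', hw', rfl⟩)))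
  · refine le_Qval fun T' m hm hT => ?_
    obtain ⟨n, rfl, h⟩ | ⟨n, rfl, h⟩ | ⟨n₁, n₂, u', w', rfl, hu, hw, rfl⟩ :=
      RaisedFromPruning.node_iff.1 hT
    · exact (min_le_left _ _).trans (Qval_le (by omega) h)
    · exact ((min_le_right _ _).trans (min_le_left _ _)).trans (Qval_le (by omega) h)
    · refine ((min_le_right _ _).trans (min_le_right _ _)).trans ?_
      refine (Finset.inf_le (b := min n₁ k) (Finset.mem_range.2 (by omega))).trans ?_
      rw [errCount_node, Nat.cast_add]
      exact add_le_add (Qval_le (min_le_left _ _) hu) (Qval_le (by omega) hw)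

end Qval

/-- The dynamic programming recurrence for optimal subtree raising:
(i) at a leaf `v`, `Q[v,(ℓ,r),0]` is the number of examples of the box that disagree
with the label of `v`, and `Q[v,(ℓ,r),k'] = ⊤` for `k' ≥ 1`;
(ii) at an inner node `v` with children `u`, `w`, `Q[v,(ℓ,r),k']` is the minimum of
`Q[u,(ℓ,r), k'∸(s_w+1)]`, `Q[w,(ℓ,r), k'∸(s_u+1)]`, and the minimum over
`0 ≤ k'' ≤ k'` of `Q[u,(ℓ,rᵘ),k''] + Q[w,(ℓʷ,r),k'-k'']`, where `rᵘ` and `ℓʷ`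
update the coordinate `feat(v)` to `min (r feat(v)) thr(v)` and
`max (ℓ feat(v)) thr(v)`, respectively. -/
theorem stmt3 {d : ℕ} (E : Finset (Fin d → ℝ)) (lab : (Fin d → ℝ) → Label)
    (T : DTree (Fin d)) (lo hi : Fin d → ℝ) (hbox : ∀ i, lo i ≤ hi i) :
    (∀ (v : List Bool) (c : Label), T.subtreeAt v = some (.leaf c) →
      Qval E lab (.leaf c) lo hi 0
        = ((E.filter fun e => (∀ i, lo i < e i ∧ e i ≤ hi i) ∧ lab e ≠ c).card : ℕ∞)
      ∧ ∀ k' : ℕ, 1 ≤ k' → Qval E lab (.leaf c) lo hi k' = ⊤)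
    ∧ (∀ (v : List Bool) (f : Fin d) (t : ℝ) (u w : DTree (Fin d)) (k' : ℕ),
        T.subtreeAt v = some (.node f t u w) →
        Qval E lab (.node f t u w) lo hi k'
          = min (Qval E lab u lo hi (k' - (w.innerCount + 1)))
              (min (Qval E lab w lo hi (k' - (u.innerCount + 1)))
                ((Finset.range (k' + 1)).inf fun k'' =>
                  Qval E lab u lo (Function.update hi f (min (hi f) t)) k''
                  + Qval E lab w (Function.update lo f (max (lo f) t)) hi (k' - k'')))) := by
  exact ⟨fun _ c _ => ⟨Qval_leaf_zero E lab c lo hi,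
      fun _ hk => Qval_leaf_of_pos E lab c lo hi hk⟩,
    fun _ f t u w k' _ => Qval_node E lab f t u w lo hi k'⟩
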